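/- arXiv:2504.10091 — 3 statements merged into one kernel-verified Lean document; each statement's English description precedes it below -/
import Mathlib

section
/- (Moments estimate for the forward Euler scheme.) Let q ≥ 1, let f₀ be a probability measure on ℝ^d with finite q-th moment, let b be a probability measure on Θ with bounded support, and assume the collision map 𝒞 satisfies the linear growth condition |𝒞(v,v*,θ)| ≤ C_𝒞 (1+|θ|)(|v|+|v*|). Let Δt ∈ (0,1] and define the forward Euler iterates f_{n+1} = (1−Δt) f_n + Δt Q⁺(f_n,f_n), where Q⁺(f,f) = 𝒞_#(f ⊗ f ⊗ b). Then there exists a constant C > 0 depending only on q, C_𝒞 and M_∞(b) such that for all n ∈ ℕ, M_q(f_n)^{1/q} ≤ e^{C n Δt} M_q(f₀)^{1/q}. -/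
open MeasureTheory ProbabilityTheory Set
open scoped ENNReal

noncomputable section

/-- `Vec d` is the Euclidean space `ℝ^d`. -/
abbrev Vec (d : ℕ) := EuclideanSpace ℝ (Fin d)

/-- Wasserstein-1 distance between two measures, defined as the infimum of
transport costs over all couplings. -/
noncomputable def W1 {E : Type*} [MeasurableSpace E] [NormedAddCommGroup E]
    (μ ν : Measure E) : ℝ :=
  sInf { c : ℝ | ∃ γ : Measure (E × E),
    γ.map Prod.fst = μ ∧ γ.map Prod.snd = ν ∧ c = ∫ p, ‖p.1 - p.2‖ ∂γ }

/-- Gain part `Q⁺(f,g) = 𝒞_#(f ⊗ g ⊗ b)` of the collisional operator. -/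
noncomputable def Qgain {E P : Type*} [MeasurableSpace E] [MeasurableSpace P]
    (𝒞 : E → E → P → E) (b : Measure P) (f g : Measure E) : Measure E :=
  ((f.prod g).prod b).map fun p => 𝒞 p.1.1 p.1.2 p.2

/-- `q`-th moment `M_q(μ) = ∫ ‖v‖^q dμ`. -/
noncomputable def momq {E : Type*} [MeasurableSpace E] [NormedAddCommGroup E]
    (q : ℝ) (μ : Measure E) : ℝ := ∫ v, ‖v‖ ^ q ∂μ

/-- Bernoulli law `(1-p)δ₀ + pδ₁` on `ℝ`. -/
noncomputable def bern (p : ℝ) : Measure ℝ :=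
  ENNReal.ofReal (1 - p) • Measure.dirac (0 : ℝ) + ENNReal.ofReal p • Measure.dirac 1

/-- Uniform distribution on `[0,N)`. -/
noncomputable def unifIco (N : ℕ) : Measure ℝ :=
  ((N : ℝ≥0∞))⁻¹ • volume.restrict (Set.Ico (0 : ℝ) (N : ℝ))

/-- Index `j(α) = ⌊α⌋ + 1` (in 0-based indexing, `⌊α⌋`) of the collision partner. -/
def jIdx (N : ℕ) [NeZero N] (α : ℝ) : Fin N :=
  ⟨⌊α⌋.toNat % N, Nat.mod_lt _ (Nat.pos_of_ne_zero (NeZero.ne N))⟩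

/-- Empirical measure of a particle configuration. -/
noncomputable def empMeas {E : Type*} [MeasurableSpace E] {N : ℕ} (v : Fin N → E) : Measure E :=
  ((N : ℝ≥0∞))⁻¹ • ∑ i, Measure.dirac (v i)

/-- Forward Euler iterates `f_{n+1} = (1-Δt) f_n + Δt Q⁺(f_n,f_n)`. -/
noncomputable def eulerSeq {E P : Type*} [MeasurableSpace E] [MeasurableSpace P]
    (𝒞 : E → E → P → E) (b : Measure P) (f₀ : Measure E) (Δt : ℝ) : ℕ → Measure E
  | 0 => f₀
  | n + 1 =>
      ENNReal.ofReal (1 - Δt) • eulerSeq 𝒞 b f₀ Δt n +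
        ENNReal.ofReal Δt • Qgain 𝒞 b (eulerSeq 𝒞 b f₀ Δt n) (eulerSeq 𝒞 b f₀ Δt n)

/-- Piecewise-linear-in-time interpolation of the forward Euler iterates. -/
noncomputable def eulerInterp {E P : Type*} [MeasurableSpace E] [MeasurableSpace P]
    (𝒞 : E → E → P → E) (b : Measure P) (f₀ : Measure E) (Δt : ℝ) (t : ℝ) : Measure E :=
  ENNReal.ofReal (1 - (t - ⌊t / Δt⌋.toNat * Δt) / Δt) • eulerSeq 𝒞 b f₀ Δt ⌊t / Δt⌋.toNat +
    ENNReal.ofReal ((t - ⌊t / Δt⌋.toNat * Δt) / Δt) • eulerSeq 𝒞 b f₀ Δt (⌊t / Δt⌋.toNat + 1)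

/-- Monte Carlo rate `ε(N)` from `fournier2015rate`. -/
noncomputable def epsRate (d N : ℕ) : ℝ :=
  if d = 1 then (N : ℝ) ^ (-(1/2 : ℝ))
  else if d = 2 then (N : ℝ) ^ (-(1/2 : ℝ)) * Real.log (1 + N)
  else (N : ℝ) ^ (-(1 / (d : ℝ)))

/-- Right-hand side of the weak formulation of the Boltzmann-type equation,
tested against `φ`. -/
noncomputable def collRHS {E P : Type*} [MeasurableSpace E] [MeasurableSpace P]
    (𝒞 : E → E → P → E) (b : Measure P) (μ : Measure E) (φ : E → ℝ) : ℝ :=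
  (1/2) * ∫ p, (φ (𝒞 p.1.1 p.1.2 p.2) + φ (𝒞 p.1.2 p.1.1 p.2) - φ p.1.1 - φ p.1.2)
    ∂((μ.prod μ).prod b)

/-- Weak measure solution of `∂ₜ f = Q(f,f)` on `[0,T]`, with values in `P₁(ℝ^d)`
(continuity in the Wasserstein-1 distance), in integrated-in-time form. -/
def IsWeakSol {d m : ℕ} (𝒞 : Vec d → Vec d → Vec m → Vec d) (b : Measure (Vec m))
    (T : ℝ) (f : ℝ → Measure (Vec d)) : Prop :=
  (∀ t ∈ Set.Icc (0:ℝ) T, IsProbabilityMeasure (f t)) ∧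
  (∀ t ∈ Set.Icc (0:ℝ) T, Integrable (fun v : Vec d => ‖v‖) (f t)) ∧
  (∀ t ∈ Set.Icc (0:ℝ) T, ∀ ε > (0:ℝ), ∃ δ > (0:ℝ),
     ∀ s ∈ Set.Icc (0:ℝ) T, |s - t| < δ → W1 (f s) (f t) < ε) ∧
  ∀ φ : Vec d → ℝ, ContDiff ℝ (⊤ : ℕ∞) φ → HasCompactSupport φ →
    ∀ t ∈ Set.Icc (0:ℝ) T,
      (∫ v, φ v ∂(f t)) - (∫ v, φ v ∂(f 0)) = ∫ s in (0:ℝ)..t, collRHS 𝒞 b (f s) φ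

/-!
By convexity of `r ↦ r ^ q`, the linear growth `‖𝒞 v v' θ‖ ≤ A (‖v‖ + ‖v'‖)` gives
`M_q(Q⁺(f, f)) ≤ (2A)^q M_q(f)`. The moment is affine in the measure, so an Euler step multiplies it
by at most `1 - Δt + (2A)^q Δt ≤ exp ((2A)^q Δt)`. Iterating `n` times and taking `q`-th roots
yields the estimate with `C = (2A)^q / q`.
-/

/-- The linear growth condition on the collision map, with the factor `C_𝒞 (1 + |θ|)` absorbed into
a single constant `A`; this is possible when `b` has bounded support. -/
def HasLinearGrowth {E P : Type*} [NormedAddCommGroup E] [MeasurableSpace P]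
    (𝒞 : E → E → P → E) (b : Measure P) (A : ℝ) : Prop :=
  ∀ᵐ θ ∂b, ∀ v v', ‖𝒞 v v' θ‖ ≤ A * (‖v‖ + ‖v'‖)

section Measure

variable {X Y : Type*} [MeasurableSpace X] [MeasurableSpace Y]

lemma isProbabilityMeasure_convexComb {t : ℝ} (ht : t ∈ Icc (0 : ℝ) 1) (μ ν : Measure X)
    [IsProbabilityMeasure μ] [IsProbabilityMeasure ν] :
    IsProbabilityMeasure (ENNReal.ofReal (1 - t) • μ + ENNReal.ofReal t • ν) where
  measure_univ := by
    simp [← ENNReal.ofReal_add (sub_nonneg.2 ht.2) ht.1]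

lemma integral_fst_add_snd_prod {F : Type*} [NormedAddCommGroup F] [NormedSpace ℝ F]
    {μ : Measure X} {ν : Measure Y} [IsProbabilityMeasure μ] [IsProbabilityMeasure ν]
    {φ : X → F} {ψ : Y → F} (hφ : Integrable φ μ) (hψ : Integrable ψ ν) :
    ∫ p, (φ p.1 + ψ p.2) ∂μ.prod ν = ∫ x, φ x ∂μ + ∫ y, ψ y ∂ν := by
  rw [integral_add (hφ.comp_fst ν) (hψ.comp_snd μ), integral_fun_fst, integral_fun_snd]
  simp

end Measure

section ProbabilityMeasure

variable {E P : Type*} [MeasurableSpace E] [MeasurableSpace P] {𝒞 : E → E → P → E} {b : Measure P}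
  [IsProbabilityMeasure b]

lemma isProbabilityMeasure_Qgain (f g : Measure E) [IsProbabilityMeasure f]
    [IsProbabilityMeasure g] (h𝒞 : Measurable fun p : (E × E) × P ↦ 𝒞 p.1.1 p.1.2 p.2) :
    IsProbabilityMeasure (Qgain 𝒞 b f g) :=
  Measure.isProbabilityMeasure_map h𝒞.aemeasurable

lemma isProbabilityMeasure_eulerSeq (f₀ : Measure E) [IsProbabilityMeasure f₀]
    (h𝒞 : Measurable fun p : (E × E) × P ↦ 𝒞 p.1.1 p.1.2 p.2) {Δt : ℝ}
    (hΔt : Δt ∈ Icc (0 : ℝ) 1) (n : ℕ) : IsProbabilityMeasure (eulerSeq 𝒞 b f₀ Δt n) := by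
  induction n with
  | zero => assumption
  | succ n _ =>
    have := isProbabilityMeasure_Qgain (b := b) (eulerSeq 𝒞 b f₀ Δt n)
      (eulerSeq 𝒞 b f₀ Δt n) h𝒞
    exact isProbabilityMeasure_convexComb hΔt _ _

end ProbabilityMeasure

lemma add_rpow_le_two_rpow_mul_rpow_add_rpow {x y q : ℝ} (hx : 0 ≤ x) (hy : 0 ≤ y) (hq : 1 ≤ q) :
    (x + y) ^ q ≤ 2 ^ (q - 1) * (x ^ q + y ^ q) := by
  lift x to NNReal using hx
  lift y to NNReal using hy
  exact_mod_cast NNReal.rpow_add_le_mul_rpow_add_rpow x y hq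

section Moment

variable {E : Type*} [MeasurableSpace E] [NormedAddCommGroup E] {q : ℝ} {μ ν : Measure E}

lemma momq_nonneg (q : ℝ) (μ : Measure E) : 0 ≤ momq q μ :=
  integral_nonneg fun _ ↦ by positivity

lemma momq_smul_measure (q : ℝ) (c : ℝ≥0∞) (μ : Measure E) :
    momq q (c • μ) = c.toReal * momq q μ :=
  integral_smul_measure _ c

lemma momq_add_measure (hμ : Integrable (fun v ↦ ‖v‖ ^ q) μ)
    (hν : Integrable (fun v ↦ ‖v‖ ^ q) ν) : momq q (μ + ν) = momq q μ + momq q ν :=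
  integral_add_measure hμ hν

lemma momq_convexComb {t : ℝ} (ht : t ∈ Icc (0 : ℝ) 1) (hμ : Integrable (fun v ↦ ‖v‖ ^ q) μ)
    (hν : Integrable (fun v ↦ ‖v‖ ^ q) ν) :
    momq q (ENNReal.ofReal (1 - t) • μ + ENNReal.ofReal t • ν) =
      (1 - t) * momq q μ + t * momq q ν := by
  rw [momq_add_measure (hμ.smul_measure ENNReal.ofReal_ne_top)
      (hν.smul_measure ENNReal.ofReal_ne_top), momq_smul_measure, momq_smul_measure,
    ENNReal.toReal_ofReal (sub_nonneg.2 ht.2), ENNReal.toReal_ofReal ht.1]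

end Moment

section Collision

variable {E P : Type*} [NormedAddCommGroup E] [MeasurableSpace P]
  {𝒞 : E → E → P → E} {b : Measure P} {A q : ℝ}

lemma hasLinearGrowth_of_ae_norm_le [Norm P] {K M : ℝ} (hK : 0 ≤ K) (hb : ∀ᵐ θ ∂b, ‖θ‖ ≤ M)
    (h : ∀ v v' θ, ‖𝒞 v v' θ‖ ≤ K * (1 + ‖θ‖) * (‖v‖ + ‖v'‖)) :
    HasLinearGrowth 𝒞 b (K * (1 + M)) := by
  filter_upwards [hb] with θ hθ v v'
  exact (h v v' θ).trans (by gcongr)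

lemma HasLinearGrowth.ae_norm_rpow_le (h : HasLinearGrowth 𝒞 b A) (hA : 0 ≤ A) (hq : 1 ≤ q) :
    ∀ᵐ θ ∂b, ∀ v v', ‖𝒞 v v' θ‖ ^ q ≤ A ^ q * 2 ^ (q - 1) * (‖v‖ ^ q + ‖v'‖ ^ q) := by
  filter_upwards [h] with θ hθ v v'
  calc ‖𝒞 v v' θ‖ ^ q
      ≤ (A * (‖v‖ + ‖v'‖)) ^ q := by gcongr; exact hθ v v'
    _ = A ^ q * (‖v‖ + ‖v'‖) ^ q := Real.mul_rpow hA (by positivity)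
    _ ≤ A ^ q * (2 ^ (q - 1) * (‖v‖ ^ q + ‖v'‖ ^ q)) := by
        gcongr
        exact add_rpow_le_two_rpow_mul_rpow_add_rpow (norm_nonneg v) (norm_nonneg v') hq
    _ = A ^ q * 2 ^ (q - 1) * (‖v‖ ^ q + ‖v'‖ ^ q) := (mul_assoc ..).symm

variable [MeasurableSpace E] [IsProbabilityMeasure b] {f g : Measure E}
  [IsProbabilityMeasure f] [IsProbabilityMeasure g] [OpensMeasurableSpace E]

lemma integrable_norm_rpow_Qgain (hq : 1 ≤ q) (hA : 0 ≤ A)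
    (h𝒞 : Measurable fun p : (E × E) × P ↦ 𝒞 p.1.1 p.1.2 p.2) (hgrowth : HasLinearGrowth 𝒞 b A)
    (hf : Integrable (fun v ↦ ‖v‖ ^ q) f) (hg : Integrable (fun v ↦ ‖v‖ ^ q) g) :
    Integrable (fun v ↦ ‖v‖ ^ q) (Qgain 𝒞 b f g) := by
  have hmeas : Measurable fun v : E ↦ ‖v‖ ^ q := by fun_prop
  refine (integrable_map_measure hmeas.aestronglyMeasurable h𝒞.aemeasurable).2 ?_
  refine ((((hf.comp_fst g).add (hg.comp_snd f)).comp_fst b).const_mul (A ^ q * 2 ^ (q - 1))).mono'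
    (hmeas.comp h𝒞).aestronglyMeasurable ?_
  filter_upwards [Measure.quasiMeasurePreserving_snd.ae (hgrowth.ae_norm_rpow_le hA hq)] with p hp
  simpa [abs_of_nonneg, Real.rpow_nonneg] using hp p.1.1 p.1.2

lemma momq_Qgain_le (hq : 1 ≤ q) (hA : 0 ≤ A)
    (h𝒞 : Measurable fun p : (E × E) × P ↦ 𝒞 p.1.1 p.1.2 p.2) (hgrowth : HasLinearGrowth 𝒞 b A)
    (hf : Integrable (fun v ↦ ‖v‖ ^ q) f) (hg : Integrable (fun v ↦ ‖v‖ ^ q) g) :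
    momq q (Qgain 𝒞 b f g) ≤ A ^ q * 2 ^ (q - 1) * (momq q f + momq q g) := by
  have hmeas : Measurable fun v : E ↦ ‖v‖ ^ q := by fun_prop
  calc momq q (Qgain 𝒞 b f g)
      = ∫ p, ‖𝒞 p.1.1 p.1.2 p.2‖ ^ q ∂(f.prod g).prod b :=
        integral_map h𝒞.aemeasurable hmeas.aestronglyMeasurable
    _ ≤ ∫ p, A ^ q * 2 ^ (q - 1) * (‖p.1.1‖ ^ q + ‖p.1.2‖ ^ q) ∂(f.prod g).prod b := by
        refine integral_mono_of_nonneg (.of_forall fun p ↦ by positivity)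
          ((((hf.comp_fst g).add (hg.comp_snd f)).comp_fst b).const_mul _) ?_
        filter_upwards [Measure.quasiMeasurePreserving_snd.ae
          (hgrowth.ae_norm_rpow_le hA hq)] with p hp
        exact hp p.1.1 p.1.2
    _ = A ^ q * 2 ^ (q - 1) * ∫ p, (‖p.1‖ ^ q + ‖p.2‖ ^ q) ∂f.prod g := by
        rw [integral_const_mul, integral_fun_fst (fun p : E × E ↦ ‖p.1‖ ^ q + ‖p.2‖ ^ q)]
        simp
    _ = A ^ q * 2 ^ (q - 1) * (momq q f + momq q g) := by
        rw [integral_fst_add_snd_prod hf hg, momq, momq]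

lemma momq_Qgain_self_le (hq : 1 ≤ q) (hA : 0 ≤ A)
    (h𝒞 : Measurable fun p : (E × E) × P ↦ 𝒞 p.1.1 p.1.2 p.2) (hgrowth : HasLinearGrowth 𝒞 b A)
    (hf : Integrable (fun v ↦ ‖v‖ ^ q) f) :
    momq q (Qgain 𝒞 b f f) ≤ (2 * A) ^ q * momq q f := by
  refine (momq_Qgain_le hq hA h𝒞 hgrowth hf hf).trans_eq ?_
  rw [Real.mul_rpow zero_le_two hA, Real.rpow_sub_one two_ne_zero]
  ring

end Collision

section Euler

variable {E P : Type*} [NormedAddCommGroup E] [MeasurableSpace E] [MeasurableSpace P]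
  {𝒞 : E → E → P → E} {b : Measure P} [IsProbabilityMeasure b] {f₀ : Measure E}
  [IsProbabilityMeasure f₀] [OpensMeasurableSpace E] {A q Δt : ℝ}

lemma integrable_norm_rpow_eulerSeq (hq : 1 ≤ q) (hA : 0 ≤ A)
    (h𝒞 : Measurable fun p : (E × E) × P ↦ 𝒞 p.1.1 p.1.2 p.2) (hgrowth : HasLinearGrowth 𝒞 b A)
    (hf₀ : Integrable (fun v ↦ ‖v‖ ^ q) f₀) (hΔt : Δt ∈ Icc (0 : ℝ) 1) (n : ℕ) :
    Integrable (fun v ↦ ‖v‖ ^ q) (eulerSeq 𝒞 b f₀ Δt n) := by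
  induction n with
  | zero => exact hf₀
  | succ n ih =>
    have := isProbabilityMeasure_eulerSeq (b := b) f₀ h𝒞 hΔt n
    exact (ih.smul_measure ENNReal.ofReal_ne_top).add_measure
      ((integrable_norm_rpow_Qgain hq hA h𝒞 hgrowth ih ih).smul_measure ENNReal.ofReal_ne_top)

lemma momq_eulerSeq_succ_le (hq : 1 ≤ q) (hA : 0 ≤ A)
    (h𝒞 : Measurable fun p : (E × E) × P ↦ 𝒞 p.1.1 p.1.2 p.2) (hgrowth : HasLinearGrowth 𝒞 b A)
    (hf₀ : Integrable (fun v ↦ ‖v‖ ^ q) f₀) (hΔt : Δt ∈ Icc (0 : ℝ) 1) (n : ℕ) :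
    momq q (eulerSeq 𝒞 b f₀ Δt (n + 1)) ≤
      Real.exp ((2 * A) ^ q * Δt) * momq q (eulerSeq 𝒞 b f₀ Δt n) := by
  have := isProbabilityMeasure_eulerSeq (b := b) f₀ h𝒞 hΔt n
  have hint := integrable_norm_rpow_eulerSeq hq hA h𝒞 hgrowth hf₀ hΔt n
  have hQint := integrable_norm_rpow_Qgain hq hA h𝒞 hgrowth hint hint
  have hQ := momq_Qgain_self_le hq hA h𝒞 hgrowth hint
  rw [eulerSeq, momq_convexComb hΔt hint hQint]
  set M := momq q (eulerSeq 𝒞 b f₀ Δt n)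
  have hM : 0 ≤ M := momq_nonneg q _
  calc (1 - Δt) * M + Δt * momq q (Qgain 𝒞 b (eulerSeq 𝒞 b f₀ Δt n) (eulerSeq 𝒞 b f₀ Δt n))
      ≤ (1 - Δt) * M + Δt * ((2 * A) ^ q * M) := by gcongr; exact hΔt.1
    _ = ((2 * A) ^ q * Δt + 1 - Δt) * M := by ring
    _ ≤ Real.exp ((2 * A) ^ q * Δt) * M := by
        gcongr
        linarith [Real.add_one_le_exp ((2 * A) ^ q * Δt), hΔt.1]

lemma momq_eulerSeq_le (hq : 1 ≤ q) (hA : 0 ≤ A)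
    (h𝒞 : Measurable fun p : (E × E) × P ↦ 𝒞 p.1.1 p.1.2 p.2) (hgrowth : HasLinearGrowth 𝒞 b A)
    (hf₀ : Integrable (fun v ↦ ‖v‖ ^ q) f₀) (hΔt : Δt ∈ Icc (0 : ℝ) 1) (n : ℕ) :
    momq q (eulerSeq 𝒞 b f₀ Δt n) ≤ Real.exp ((2 * A) ^ q * n * Δt) * momq q f₀ := by
  have hgeom := le_geom (u := fun k ↦ momq q (eulerSeq 𝒞 b f₀ Δt k)) (Real.exp_nonneg _) n
    fun k _ ↦ momq_eulerSeq_succ_le hq hA h𝒞 hgrowth hf₀ hΔt k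
  rwa [← Real.exp_nat_mul, mul_left_comm, ← mul_assoc] at hgeom

theorem euler_moment_estimate_general (hq : 1 ≤ q) (hA : 0 ≤ A)
    (h𝒞 : Measurable fun p : (E × E) × P ↦ 𝒞 p.1.1 p.1.2 p.2) (hgrowth : HasLinearGrowth 𝒞 b A)
    (hf₀ : Integrable (fun v ↦ ‖v‖ ^ q) f₀) (hΔt : Δt ∈ Icc (0 : ℝ) 1) (n : ℕ) :
    momq q (eulerSeq 𝒞 b f₀ Δt n) ^ (1 / q) ≤
      Real.exp ((2 * A) ^ q / q * n * Δt) * momq q f₀ ^ (1 / q) := by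
  calc momq q (eulerSeq 𝒞 b f₀ Δt n) ^ (1 / q)
      ≤ (Real.exp ((2 * A) ^ q * n * Δt) * momq q f₀) ^ (1 / q) :=
        Real.rpow_le_rpow (momq_nonneg q _) (momq_eulerSeq_le hq hA h𝒞 hgrowth hf₀ hΔt n)
          (by positivity)
    _ = Real.exp ((2 * A) ^ q * n * Δt * (1 / q)) * momq q f₀ ^ (1 / q) := by
        rw [Real.mul_rpow (Real.exp_nonneg _) (momq_nonneg q f₀), ← Real.exp_mul]
    _ = Real.exp ((2 * A) ^ q / q * n * Δt) * momq q f₀ ^ (1 / q) := by ring_nf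

end Euler

/-- moments estimate for the forward Euler scheme
`f_{n+1} = (1-Δt) f_n + Δt Q⁺(f_n,f_n)`. -/
theorem euler_moment_estimate (q : ℝ) (hq : 1 ≤ q) (Cc Mb : ℝ) (hCc : 0 < Cc) (hMb : 0 ≤ Mb) :
    ∃ C > (0:ℝ),
      ∀ (d m : ℕ) (b : Measure (Vec m)), IsProbabilityMeasure b →
      (∀ᵐ θ ∂b, ‖θ‖ ≤ Mb) →
      ∀ (𝒞 : Vec d → Vec d → Vec m → Vec d),
        Measurable (fun p : (Vec d × Vec d) × Vec m => 𝒞 p.1.1 p.1.2 p.2) →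
        (∀ v vs θ, ‖𝒞 v vs θ‖ ≤ Cc * (1 + ‖θ‖) * (‖v‖ + ‖vs‖)) →
      ∀ f₀ : Measure (Vec d), IsProbabilityMeasure f₀ →
        Integrable (fun v : Vec d => ‖v‖ ^ q) f₀ →
      ∀ Δt : ℝ, Δt ∈ Set.Ioc (0:ℝ) 1 →
      ∀ n : ℕ,
        (momq q (eulerSeq 𝒞 b f₀ Δt n)) ^ (1/q) ≤
          Real.exp (C * n * Δt) * (momq q f₀) ^ (1/q) := by
  refine ⟨(2 * (Cc * (1 + Mb))) ^ q / q, by positivity, ?_⟩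
  intro d m b _ hb 𝒞 h𝒞 hgrowth f₀ _ hf₀ Δt hΔt n
  exact euler_moment_estimate_general hq (by positivity) h𝒞
    (hasLinearGrowth_of_ae_norm_le hCc.le hb hgrowth) hf₀ (Ioc_subset_Icc_self hΔt) n

end
end

section
/- (Lipschitz continuity of the gain operator in Wasserstein-1.) Let b be a probability measure on Θ with bounded support and let 𝒞 : ℝ^d × ℝ^d × Θ → ℝ^d satisfy the Lipschitz condition |𝒞(v,v*,θ) − 𝒞(w,w*,θ)| ≤ L_𝒞 (1+|θ|)(|v−w| + |v*−w*|) for all v,v*,w,w*,θ. Define Q⁺(f,g) := 𝒞_#(f ⊗ g ⊗ b). Then for all probability measures f₁, f₂, g₁, g₂ on ℝ^d with finite first moments, W₁(Q⁺(f₁,f₂), Q⁺(g₁,g₂)) ≤ L_𝒞 (1 + M_∞(b)) (W₁(f₁,g₁) + W₁(f₂,g₂)). -/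
open MeasureTheory ProbabilityTheory Set
open scoped ENNReal

noncomputable section

/-!
Given couplings `γ₁` of `f₁, g₁` and `γ₂` of `f₂, g₂`, draw `(v, w)` from `γ₁` and, independently,
`(v*, w*)` from `γ₂`, and let both pairs collide with the *same* parameter `θ`. The law of
`(𝒞(v, v*, θ), 𝒞(w, w*, θ))` couples the two gains, and since `θ` is independent of the pairs, the
Lipschitz bound on `𝒞` integrates to the mean Lipschitz constant times the sum of the costs of
`γ₁` and `γ₂`. It remains to take the infimum over both couplings.
-/

section Coupling

variable {E : Type*} [MeasurableSpace E]

/-- A measure `γ` on `E × E` is a coupling of `μ` and `ν` if these are its two marginals. -/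
structure IsCoupling (γ : Measure (E × E)) (μ ν : Measure E) : Prop where
  fst_eq : γ.fst = μ
  snd_eq : γ.snd = ν

theorem isCoupling_prod (μ ν : Measure E) [IsProbabilityMeasure μ] [IsProbabilityMeasure ν] :
    IsCoupling (μ.prod ν) μ ν :=
  ⟨Measure.fst_prod, Measure.snd_prod⟩

namespace IsCoupling

variable {γ : Measure (E × E)} {μ ν : Measure E}

theorem isProbabilityMeasure (h : IsCoupling γ μ ν) [IsProbabilityMeasure μ] :
    IsProbabilityMeasure γ :=
  ⟨by rw [← Measure.fst_univ, h.fst_eq, measure_univ]⟩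

theorem integrable_norm_sub [NormedAddCommGroup E] [OpensMeasurableSpace E]
    [SecondCountableTopology E] (h : IsCoupling γ μ ν)
    (hμ : Integrable (fun v => ‖v‖) μ) (hν : Integrable (fun v => ‖v‖) ν) :
    Integrable (fun p : E × E => ‖p.1 - p.2‖) γ := by
  rw [← h.fst_eq] at hμ
  rw [← h.snd_eq] at hν
  have hfst : Integrable (fun p : E × E => ‖p.1‖) γ := hμ.comp_measurable measurable_fst
  have hsnd : Integrable (fun p : E × E => ‖p.2‖) γ := hν.comp_measurable measurable_snd
  have hmeas : AEStronglyMeasurable (fun p : E × E => ‖p.1 - p.2‖) γ := by fun_prop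
  exact (hfst.add hsnd).mono' hmeas <| .of_forall fun p =>
    (norm_norm _).trans_le (norm_sub_le p.1 p.2)

end IsCoupling

end Coupling

section Wasserstein

variable {E F : Type*} [MeasurableSpace E] [NormedAddCommGroup E]
  [MeasurableSpace F] [NormedAddCommGroup F]

/-- The cost `∫ ‖v - w‖ γ(dv, dw)` of a transport plan `γ`. As a Bochner integral it is `0` when
the distance is not `γ`-integrable. -/
def transportCost (γ : Measure (E × E)) : ℝ := ∫ p, ‖p.1 - p.2‖ ∂γ

theorem transportCost_nonneg (γ : Measure (E × E)) : 0 ≤ transportCost γ :=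
  integral_nonneg fun _ => norm_nonneg _

theorem W1_eq_sInf_image (μ ν : Measure E) :
    W1 μ ν = sInf (transportCost '' {γ | IsCoupling γ μ ν}) := by
  unfold W1
  congr 1
  ext c
  exact ⟨fun ⟨γ, hfst, hsnd, hc⟩ => ⟨γ, ⟨hfst, hsnd⟩, hc.symm⟩,
    fun ⟨γ, hγ, hc⟩ => ⟨γ, hγ.fst_eq, hγ.snd_eq, hc.symm⟩⟩

theorem bddBelow_transportCost_image (s : Set (Measure (E × E))) : BddBelow (transportCost '' s) :=
  ⟨0, forall_mem_image.2 fun γ _ => transportCost_nonneg γ⟩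

theorem W1_le_transportCost {γ : Measure (E × E)} {μ ν : Measure E} (h : IsCoupling γ μ ν) :
    W1 μ ν ≤ transportCost γ := by
  rw [W1_eq_sInf_image]
  exact csInf_le (bddBelow_transportCost_image _) (mem_image_of_mem _ h)

theorem nonempty_transportCost_image (μ ν : Measure E) [IsProbabilityMeasure μ]
    [IsProbabilityMeasure ν] : (transportCost '' {γ | IsCoupling γ μ ν}).Nonempty :=
  ⟨_, mem_image_of_mem _ (isCoupling_prod μ ν)⟩

open scoped Pointwise in
theorem le_mul_W1_add_W1 {μ₁ ν₁ : Measure E} {μ₂ ν₂ : Measure F}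
    [IsProbabilityMeasure μ₁] [IsProbabilityMeasure ν₁]
    [IsProbabilityMeasure μ₂] [IsProbabilityMeasure ν₂] {a K : ℝ} (hK : 0 ≤ K)
    (h : ∀ γ₁ γ₂, IsCoupling γ₁ μ₁ ν₁ → IsCoupling γ₂ μ₂ ν₂ →
      a ≤ K * (transportCost γ₁ + transportCost γ₂)) :
    a ≤ K * (W1 μ₁ ν₁ + W1 μ₂ ν₂) := by
  have hne₁ := nonempty_transportCost_image μ₁ ν₁
  have hne₂ := nonempty_transportCost_image μ₂ ν₂
  rw [W1_eq_sInf_image, W1_eq_sInf_image,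
    ← csInf_add hne₁ (bddBelow_transportCost_image _) hne₂ (bddBelow_transportCost_image _),
    ← smul_eq_mul, ← Real.sInf_smul_of_nonneg hK]
  refine le_csInf (hne₁.add hne₂).smul_set ?_
  rintro _ ⟨_, ⟨_, ⟨γ₁, h₁, rfl⟩, _, ⟨γ₂, h₂, rfl⟩, rfl⟩, rfl⟩
  exact h γ₁ γ₂ h₁ h₂

end Wasserstein

section Gain

variable {E P : Type*} [MeasurableSpace E] [MeasurableSpace P]

theorem map_Qgain {F : Type*} [MeasurableSpace F] {𝒞 : E → E → P → E} {𝒟 : F → F → P → F}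
    {π : F → E} (h𝒞 : Measurable fun p : (E × E) × P => 𝒞 p.1.1 p.1.2 p.2)
    (h𝒟 : Measurable fun p : (F × F) × P => 𝒟 p.1.1 p.1.2 p.2) (hπ : Measurable π)
    (hcomm : ∀ x y θ, π (𝒟 x y θ) = 𝒞 (π x) (π y) θ)
    (b : Measure P) [SFinite b] (f g : Measure F) [SFinite f] [SFinite g] :
    (Qgain 𝒟 b f g).map π = Qgain 𝒞 b (f.map π) (g.map π) := by
  have hprod : ((f.map π).prod (g.map π)).prod b =
      ((f.prod g).prod b).map (Prod.map (Prod.map π π) id) := by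
    rw [Measure.map_prod_map f g hπ hπ, ← Measure.map_prod_map _ _ (hπ.prodMap hπ) measurable_id,
      Measure.map_id]
  rw [Qgain, Qgain, hprod, Measure.map_map hπ h𝒟,
    Measure.map_map h𝒞 ((hπ.prodMap hπ).prodMap measurable_id)]
  congr 1
  exact funext fun p => hcomm _ _ _

/-- The synchronous collision rule on `E × E`: both components follow `𝒞` with a common parameter
`θ`. Its gain operator turns couplings of the inputs into a coupling of the outputs. -/
def synchronousCollision (𝒞 : E → E → P → E) (x y : E × E) (θ : P) : E × E :=
  (𝒞 x.1 y.1 θ, 𝒞 x.2 y.2 θ)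

variable {𝒞 : E → E → P → E}

theorem measurable_synchronousCollision
    (h𝒞 : Measurable fun p : (E × E) × P => 𝒞 p.1.1 p.1.2 p.2) :
    Measurable fun p : ((E × E) × (E × E)) × P => synchronousCollision 𝒞 p.1.1 p.1.2 p.2 := by
  have hfst : Measurable fun p : ((E × E) × (E × E)) × P => ((p.1.1.1, p.1.2.1), p.2) := by
    fun_prop
  have hsnd : Measurable fun p : ((E × E) × (E × E)) × P => ((p.1.1.2, p.1.2.2), p.2) := by
    fun_prop
  exact (h𝒞.comp hfst).prodMk (h𝒞.comp hsnd)

theorem IsCoupling.Qgain (h𝒞 : Measurable fun p : (E × E) × P => 𝒞 p.1.1 p.1.2 p.2)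
    (b : Measure P) [SFinite b] {γ₁ γ₂ : Measure (E × E)} [SFinite γ₁] [SFinite γ₂]
    {f₁ f₂ g₁ g₂ : Measure E} (h₁ : IsCoupling γ₁ f₁ g₁) (h₂ : IsCoupling γ₂ f₂ g₂) :
    IsCoupling (Qgain (synchronousCollision 𝒞) b γ₁ γ₂) (Qgain 𝒞 b f₁ f₂) (Qgain 𝒞 b g₁ g₂) where
  fst_eq := by
    rw [← h₁.fst_eq, ← h₂.fst_eq]
    exact map_Qgain h𝒞 (measurable_synchronousCollision h𝒞) measurable_fst (fun _ _ _ => rfl) ..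
  snd_eq := by
    rw [← h₁.snd_eq, ← h₂.snd_eq]
    exact map_Qgain h𝒞 (measurable_synchronousCollision h𝒞) measurable_snd (fun _ _ _ => rfl) ..

variable [NormedAddCommGroup E] [OpensMeasurableSpace E] [SecondCountableTopology E]

theorem transportCost_Qgain_le (h𝒞 : Measurable fun p : (E × E) × P => 𝒞 p.1.1 p.1.2 p.2)
    {b : Measure P} [SFinite b] {L : P → ℝ} (hL : Integrable L b)
    (hlip : ∀ᵐ θ ∂b, ∀ v vs w ws,
      ‖𝒞 v vs θ - 𝒞 w ws θ‖ ≤ L θ * (‖v - w‖ + ‖vs - ws‖))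
    {γ₁ γ₂ : Measure (E × E)} [IsProbabilityMeasure γ₁] [IsProbabilityMeasure γ₂]
    (hγ₁ : Integrable (fun p : E × E => ‖p.1 - p.2‖) γ₁)
    (hγ₂ : Integrable (fun p : E × E => ‖p.1 - p.2‖) γ₂) :
    transportCost (Qgain (synchronousCollision 𝒞) b γ₁ γ₂) ≤
      (∫ θ, L θ ∂b) * (transportCost γ₁ + transportCost γ₂) := by
  let D : (E × E) × (E × E) → ℝ := fun q => ‖q.1.1 - q.1.2‖ + ‖q.2.1 - q.2.2‖
  have hD : Integrable D (γ₁.prod γ₂) := (hγ₁.comp_fst γ₂).add (hγ₂.comp_snd γ₁)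
  have hD_integral : ∫ q, D q ∂(γ₁.prod γ₂) = transportCost γ₁ + transportCost γ₂ := by
    rw [integral_add (hγ₁.comp_fst γ₂) (hγ₂.comp_snd γ₁),
      integral_fun_fst (fun p : E × E => ‖p.1 - p.2‖),
      integral_fun_snd (fun p : E × E => ‖p.1 - p.2‖)]
    simp only [probReal_univ, one_smul, transportCost]
  have hbound : ∀ᵐ q ∂((γ₁.prod γ₂).prod b),
      ‖𝒞 q.1.1.1 q.1.2.1 q.2 - 𝒞 q.1.1.2 q.1.2.2 q.2‖ ≤ D q.1 * L q.2 := by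
    filter_upwards [Measure.quasiMeasurePreserving_snd.ae hlip] with q hq
    exact (hq _ _ _ _).trans_eq (mul_comm _ _)
  calc transportCost (Qgain (synchronousCollision 𝒞) b γ₁ γ₂)
      = ∫ q, ‖𝒞 q.1.1.1 q.1.2.1 q.2 - 𝒞 q.1.1.2 q.1.2.2 q.2‖ ∂((γ₁.prod γ₂).prod b) :=
        integral_map (measurable_synchronousCollision h𝒞).aemeasurable (by fun_prop)
    _ ≤ ∫ q, D q.1 * L q.2 ∂((γ₁.prod γ₂).prod b) :=
        integral_mono_of_nonneg (.of_forall fun _ => norm_nonneg _) (hD.mul_prod hL) hbound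
    _ = (∫ θ, L θ ∂b) * (transportCost γ₁ + transportCost γ₂) := by
        rw [integral_prod_mul, hD_integral, mul_comm]

theorem gain_lipschitz_W1_general (h𝒞 : Measurable fun p : (E × E) × P => 𝒞 p.1.1 p.1.2 p.2)
    {b : Measure P} [SFinite b] {L : P → ℝ} (hL : Integrable L b) (hL₀ : 0 ≤ᵐ[b] L)
    (hlip : ∀ᵐ θ ∂b, ∀ v vs w ws,
      ‖𝒞 v vs θ - 𝒞 w ws θ‖ ≤ L θ * (‖v - w‖ + ‖vs - ws‖))
    {f₁ f₂ g₁ g₂ : Measure E}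
    [IsProbabilityMeasure f₁] [IsProbabilityMeasure f₂]
    [IsProbabilityMeasure g₁] [IsProbabilityMeasure g₂]
    (hf₁ : Integrable (fun v => ‖v‖) f₁) (hf₂ : Integrable (fun v => ‖v‖) f₂)
    (hg₁ : Integrable (fun v => ‖v‖) g₁) (hg₂ : Integrable (fun v => ‖v‖) g₂) :
    W1 (Qgain 𝒞 b f₁ f₂) (Qgain 𝒞 b g₁ g₂) ≤ (∫ θ, L θ ∂b) * (W1 f₁ g₁ + W1 f₂ g₂) := by
  refine le_mul_W1_add_W1 (integral_nonneg_of_ae hL₀) fun γ₁ γ₂ h₁ h₂ => ?_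
  have := h₁.isProbabilityMeasure
  have := h₂.isProbabilityMeasure
  exact (W1_le_transportCost (h₁.Qgain h𝒞 b h₂)).trans
    (transportCost_Qgain_le h𝒞 hL hlip
      (h₁.integrable_norm_sub hf₁ hg₁) (h₂.integrable_norm_sub hf₂ hg₂))

end Gain

/-- Lipschitz continuity of the gain operator in Wasserstein-1. -/
theorem gain_lipschitz_W1 (d m : ℕ) (b : Measure (Vec m)) [IsProbabilityMeasure b]
    (Mb : ℝ) (hMb : 0 ≤ Mb) (hb : ∀ᵐ θ ∂b, ‖θ‖ ≤ Mb)
    (Lc : ℝ) (hLc : 0 < Lc)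
    (𝒞 : Vec d → Vec d → Vec m → Vec d)
    (hmeas : Measurable fun p : (Vec d × Vec d) × Vec m => 𝒞 p.1.1 p.1.2 p.2)
    (hlip : ∀ v vs w ws θ,
      ‖𝒞 v vs θ - 𝒞 w ws θ‖ ≤ Lc * (1 + ‖θ‖) * (‖v - w‖ + ‖vs - ws‖))
    (f₁ f₂ g₁ g₂ : Measure (Vec d))
    [IsProbabilityMeasure f₁] [IsProbabilityMeasure f₂]
    [IsProbabilityMeasure g₁] [IsProbabilityMeasure g₂]
    (hf₁ : Integrable (fun v : Vec d => ‖v‖) f₁)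
    (hf₂ : Integrable (fun v : Vec d => ‖v‖) f₂)
    (hg₁ : Integrable (fun v : Vec d => ‖v‖) g₁)
    (hg₂ : Integrable (fun v : Vec d => ‖v‖) g₂) :
    W1 (Qgain 𝒞 b f₁ f₂) (Qgain 𝒞 b g₁ g₂) ≤
      Lc * (1 + Mb) * (W1 f₁ g₁ + W1 f₂ g₂) := by
  have hlip_Mb : ∀ᵐ θ ∂b, ∀ v vs w ws,
      ‖𝒞 v vs θ - 𝒞 w ws θ‖ ≤ Lc * (1 + Mb) * (‖v - w‖ + ‖vs - ws‖) := by
    filter_upwards [hb] with θ hθ v vs w ws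
    exact (hlip v vs w ws θ).trans (by gcongr)
  simpa only [integral_const, probReal_univ, one_smul] using
    gain_lipschitz_W1_general hmeas (integrable_const _) (.of_forall fun _ => by positivity)
      hlip_Mb hf₁ hf₂ hg₁ hg₂

end
end

section
/- (Coupling lemma for the Nanbu method.) Let f be a probability measure on ℝ^d with finite first moment and let N ∈ ℕ, N ≥ 1. Then there exists a measurable map W*_f : (ℝ^d)^N × [0,N) → ℝ^d with the following property: for every v = (v¹,…,v^N) ∈ (ℝ^d)^N, if α is uniformly distributed on [0,N) and j(α) := ⌊α⌋ + 1, then the joint law of the pair (W*_f(v,α), v^{j(α)}) is an optimal transport plan (for the cost |x−y|) between f and the empirical measure μ_v := (1/N) Σ_{i=1}^N δ_{v^i}. In particular W*_f(v,α) has law f and v^{j(α)} has law μ_v, and E|W*_f(v,α) − v^{j(α)}| = W₁(f, μ_v). -/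
open MeasureTheory ProbabilityTheory Set
open scoped ENNReal

noncomputable section

/-!
Couplings of the uniform law on the indices `Fin N` with `f` are dominated by a multiple of the
product measure, so their densities form a bounded closed convex set `K` in `L²`, and after
subtracting `‖x‖` the transport cost to the particles `v` is a linear functional on `K` that depends
continuously on `v`. For `ε > 0` the Tikhonov regularized cost has a unique minimizer on `K`, which
is continuous in `v`; as `ε → 0` the minimizers converge to an optimal density, which is therefore
measurable in `v`. The resulting kernel `κ v` is realized with the fractional part of `α`, which is
uniform on `[0, 1]` and independent of `j(α)`, as the source of randomness. Gluing along `i ↦ v i`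
lifts every coupling of `f` and `μ_v` to the indices, so `κ v` yields an optimal transport plan.
-/

open scoped NNReal

section HilbertSelection

variable {H : Type*} [NormedAddCommGroup H] [InnerProductSpace ℝ H] {K : Set H}

theorem exists_lipschitzWith_one_projection (hne : K.Nonempty) (hK : IsComplete K)
    (hcv : Convex ℝ K) :
    ∃ P : H → H, LipschitzWith 1 P ∧
      ∀ u, P u ∈ K ∧ ∀ w ∈ K, inner ℝ (u - P u) (w - P u) ≤ 0 := by
  choose P hPK hPmin using exists_norm_eq_iInf_of_complete_convex hne hK hcv
  have hP : ∀ u, ∀ w ∈ K, inner ℝ (u - P u) (w - P u) ≤ 0 := fun u =>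
    (norm_eq_iInf_iff_real_inner_le_zero hcv (hPK u)).1 (hPmin u)
  refine ⟨P, LipschitzWith.mk_one fun u w => ?_, fun u => ⟨hPK u, hP u⟩⟩
  have hsq : ‖P u - P w‖ * ‖P u - P w‖ ≤ ‖u - w‖ * ‖P u - P w‖ := calc
    ‖P u - P w‖ * ‖P u - P w‖ = inner ℝ (P u - P w) (P u - P w) :=
      (real_inner_self_eq_norm_mul_norm _).symm
    _ ≤ inner ℝ (u - w) (P u - P w) := by
      have hu := hP u (P w) (hPK w)
      have hw := hP w (P u) (hPK u)
      simp only [inner_sub_left, inner_sub_right] at *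
      linarith
    _ ≤ ‖u - w‖ * ‖P u - P w‖ := real_inner_le_norm _ _
  rw [dist_eq_norm, dist_eq_norm]
  rcases (norm_nonneg (P u - P w)).eq_or_lt with hzero | hpos
  · rw [← hzero]
    exact norm_nonneg _
  · exact le_of_mul_le_mul_right hsq hpos

theorem cauchySeq_of_dist_sq_le_sub {α : Type*} [PseudoMetricSpace α] {u : ℕ → α} {φ : ℕ → ℝ}
    (hφ : BddAbove (range φ)) (h : ∀ m n, m ≤ n → dist (u n) (u m) ^ 2 ≤ φ n - φ m) :
    CauchySeq u := by
  have hmono : Monotone φ := fun m n hmn => by linarith [h m n hmn, sq_nonneg (dist (u n) (u m))]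
  have hcauchy : CauchySeq φ := (tendsto_atTop_ciSup hmono hφ).cauchySeq
  rw [Metric.cauchySeq_iff'] at hcauchy ⊢
  intro ε hε
  obtain ⟨m, hm⟩ := hcauchy (ε ^ 2) (by positivity)
  refine ⟨m, fun n hmn => lt_of_pow_lt_pow_left₀ 2 hε.le ?_⟩
  calc dist (u n) (u m) ^ 2 ≤ φ n - φ m := h m n hmn
    _ ≤ dist (φ n) (φ m) := le_abs_self _
    _ < ε ^ 2 := hm n hmn

/-- `a` minimizes the Tikhonov-regularized functional `w ↦ ⟪c, w⟫ + ε / 2 * ‖w‖ ^ 2` over the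
convex set `K`, encoded by the first-order variational inequality. For `ε = 0` it says that `a`
minimizes the linear functional `⟪c, ·⟫` over `K`. -/
def IsTikhonovMinimizer (K : Set H) (c : H) (ε : ℝ) (a : H) : Prop :=
  a ∈ K ∧ ∀ w ∈ K, 0 ≤ inner ℝ (c + ε • a) (w - a)

namespace IsTikhonovMinimizer

variable {c a b : H} {ε δ : ℝ}

theorem isMinOn (ha : IsTikhonovMinimizer K c 0 a) : IsMinOn (inner ℝ c) K a := fun w hw => by
  simpa [inner_sub_right] using ha.2 w hw

theorem of_tendsto {ι : Type*} {l : Filter ι} [l.NeBot] {ε : ι → ℝ} {ε₀ : ℝ} {u : ι → H}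
    (hK : IsClosed K) (hu : ∀ i, IsTikhonovMinimizer K c (ε i) (u i))
    (hε : Filter.Tendsto ε l (nhds ε₀)) (ha : Filter.Tendsto u l (nhds a)) :
    IsTikhonovMinimizer K c ε₀ a :=
  ⟨hK.mem_of_tendsto ha (.of_forall fun i => (hu i).1), fun w hw =>
    ge_of_tendsto' ((tendsto_const_nhds.add (hε.smul ha)).inner (tendsto_const_nhds.sub ha))
      fun i => (hu i).2 w hw⟩

theorem norm_sub_sq_le (hδ : 0 ≤ δ) (hδε : δ < ε) (ha : IsTikhonovMinimizer K c ε a)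
    (hb : IsTikhonovMinimizer K c δ b) : ‖b - a‖ ^ 2 ≤ ‖b‖ ^ 2 - ‖a‖ ^ 2 := by
  have hexpand : ‖b‖ ^ 2 = ‖a‖ ^ 2 + 2 * inner ℝ a (b - a) + ‖b - a‖ ^ 2 := by
    rw [← norm_add_sq_real, add_sub_cancel]
  have hsum : δ * ‖b - a‖ ^ 2 ≤ (ε - δ) * inner ℝ a (b - a) := by
    have hab := ha.2 b hb.1
    have hba := hb.2 a ha.1
    rw [← real_inner_self_eq_norm_sq]
    simp only [inner_add_left, real_inner_smul_left, inner_sub_left, inner_sub_right] at *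
    linarith
  have hobtuse : 0 ≤ inner ℝ a (b - a) :=
    nonneg_of_mul_nonneg_right ((mul_nonneg hδ (sq_nonneg _)).trans hsum) (sub_pos.2 hδε)
  linarith

end IsTikhonovMinimizer

theorem exists_continuous_isTikhonovMinimizer (hne : K.Nonempty) (hK : IsComplete K)
    (hcv : Convex ℝ K) {ε : ℝ} (hε : 0 < ε) :
    ∃ a : H → H, Continuous a ∧ ∀ c, IsTikhonovMinimizer K c ε (a c) := by
  obtain ⟨P, hPlip, hP⟩ := exists_lipschitzWith_one_projection hne hK hcv
  refine ⟨fun c => P (-(ε⁻¹ • c)), hPlip.continuous.comp (by fun_prop),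
    fun c => ⟨(hP _).1, fun w hw => ?_⟩⟩
  set a := P (-(ε⁻¹ • c))
  have hscale : c + ε • a = -(ε • (-(ε⁻¹ • c) - a)) := by
    rw [smul_sub, smul_neg, smul_inv_smul₀ hε.ne']
    abel
  rw [hscale, inner_neg_left, real_inner_smul_left, neg_nonneg]
  exact mul_nonpos_of_nonneg_of_nonpos hε.le ((hP _).2 w hw)

theorem exists_tendsto_isTikhonovMinimizer (hK : IsComplete K) (hb : Bornology.IsBounded K)
    {c : H} {ε : ℕ → ℝ} (hε : StrictAnti ε) (hpos : ∀ n, 0 ≤ ε n) {u : ℕ → H}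
    (hu : ∀ n, IsTikhonovMinimizer K c (ε n) (u n)) :
    ∃ a, Filter.Tendsto u Filter.atTop (nhds a) := by
  obtain ⟨R, hR⟩ := isBounded_iff_forall_norm_le.1 hb
  have hbdd : BddAbove (range fun n => ‖u n‖ ^ 2) := by
    refine ⟨R ^ 2, ?_⟩
    rintro _ ⟨n, rfl⟩
    exact pow_le_pow_left₀ (norm_nonneg _) (hR _ (hu n).1) 2
  have hcauchy : CauchySeq u := by
    refine cauchySeq_of_dist_sq_le_sub hbdd fun m n hmn => ?_
    rcases hmn.eq_or_lt with rfl | hlt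
    · simp
    · rw [dist_eq_norm]
      exact (hu m).norm_sub_sq_le (hpos n) (hε hlt) (hu n)
  obtain ⟨a, -, ha⟩ := cauchySeq_tendsto_of_isComplete hK (fun n => (hu n).1) hcauchy
  exact ⟨a, ha⟩

theorem exists_measurable_isMinOn_inner [MeasurableSpace H] [BorelSpace H] (hne : K.Nonempty)
    (hK : IsComplete K) (hcv : Convex ℝ K) (hb : Bornology.IsBounded K) :
    ∃ m : H → H, Measurable m ∧ ∀ c, m c ∈ K ∧ IsMinOn (inner ℝ c) K (m c) := by
  set ε : ℕ → ℝ := fun n => 1 / ((n : ℝ) + 1)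
  have hpos : ∀ n, 0 < ε n := fun n => Nat.one_div_pos_of_nat
  have hanti : StrictAnti ε := fun m n hmn => Nat.one_div_lt_one_div hmn
  choose u hu_cont hu using fun n =>
    exists_continuous_isTikhonovMinimizer hne hK hcv (hpos n)
  choose m hm using fun c =>
    exists_tendsto_isTikhonovMinimizer hK hb hanti (fun n => (hpos n).le) fun n => hu n c
  have hmin : ∀ c, IsTikhonovMinimizer K c 0 (m c) := fun c =>
    .of_tendsto hK.isClosed (fun n => hu n c) tendsto_one_div_add_atTop_nhds_zero_nat (hm c)
  exact ⟨m, measurable_of_tendsto_metrizable (fun n => (hu_cont n).measurable)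
    (tendsto_pi_nhds.2 hm), fun c => ⟨(hmin c).1, (hmin c).isMinOn⟩⟩

end HilbertSelection

section Density

variable {α : Type*} [MeasurableSpace α] {ρ : Measure α}

instance posSMulMono_Lp : PosSMulMono ℝ (Lp ℝ 2 ρ) := by
  refine .of_smul_nonneg fun a ha g hg => ?_
  rw [← Lp.coeFn_nonneg] at hg ⊢
  filter_upwards [hg, Lp.coeFn_smul a g] with x hgx hax
  rw [hax]
  exact mul_nonneg ha hgx

/-- The measure with density `h` with respect to `ρ`. The negative part of `h` is cut off by
`ENNReal.ofReal`, so this is only meaningful for `0 ≤ h`. -/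
def densityMeasure (ρ : Measure α) (h : Lp ℝ 2 ρ) : Measure α :=
  ρ.withDensity fun x => ENNReal.ofReal (h x)

theorem integral_densityMeasure {h : Lp ℝ 2 ρ} (hh : 0 ≤ h) (c : Lp ℝ 2 ρ) :
    ∫ x, c x ∂(densityMeasure ρ h) = inner ℝ c h := by
  rw [densityMeasure, integral_withDensity_eq_integral_toReal_smul
    (Lp.stronglyMeasurable h).measurable.ennreal_ofReal (.of_forall fun _ => ENNReal.ofReal_lt_top),
    L2.inner_def]
  refine integral_congr_ae ?_
  filter_upwards [(Lp.coeFn_nonneg h).2 hh] with x hx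
  rw [ENNReal.toReal_ofReal hx]
  rfl

theorem isBounded_Icc_zero_Lp (b : Lp ℝ 2 ρ) : Bornology.IsBounded (Icc 0 b) :=
  isBounded_iff_forall_norm_le.2 ⟨‖b‖, fun h hh => norm_le_norm_of_abs_le_abs <| by
    rw [abs_of_nonneg hh.1, abs_of_nonneg (hh.1.trans hh.2)]
    exact hh.2⟩

variable [IsFiniteMeasure ρ]

theorem densityMeasure_apply {h : Lp ℝ 2 ρ} (hh : 0 ≤ h) {s : Set α} (hs : MeasurableSet s) :
    densityMeasure ρ h s = ENNReal.ofReal (∫ x in s, h x ∂ρ) := by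
  rw [densityMeasure, withDensity_apply _ hs, ofReal_integral_eq_lintegral_ofReal
    ((Lp.memLp h).integrable one_le_two).integrableOn
    (ae_restrict_of_ae ((Lp.coeFn_nonneg h).2 hh))]

theorem densityMeasure_apply_eq_iff {h : Lp ℝ 2 ρ} (hh : 0 ≤ h) {s : Set α} (hs : MeasurableSet s)
    {a : ℝ≥0∞} (ha : a ≠ ∞) : densityMeasure ρ h s = a ↔ ∫ x in s, h x ∂ρ = a.toReal := by
  have hint : 0 ≤ ∫ x in s, h x ∂ρ :=
    integral_nonneg_of_ae (ae_restrict_of_ae ((Lp.coeFn_nonneg h).2 hh))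
  rw [densityMeasure_apply hh hs, ← ENNReal.toReal_eq_toReal_iff' ENNReal.ofReal_ne_top ha,
    ENNReal.toReal_ofReal hint]

theorem continuous_setIntegral_L2 {s : Set α} (hs : MeasurableSet s) :
    Continuous fun h : Lp ℝ 2 ρ => ∫ x in s, h x ∂ρ := by
  simp only [← L2.inner_indicatorConstLp_one hs (measure_ne_top ρ s)]
  exact continuous_const.inner continuous_id

theorem convex_setOf_setIntegral_eq {s : Set α} (hs : MeasurableSet s) (r : ℝ) :
    Convex ℝ {h : Lp ℝ 2 ρ | ∫ x in s, h x ∂ρ = r} := by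
  simp only [← L2.inner_indicatorConstLp_one hs (measure_ne_top ρ s)]
  exact convex_hyperplane (innerₛₗ ℝ _).isLinear r

theorem rnDeriv_le_of_le_smul {π : Measure α} {C : ℝ≥0} (hπ : π ≤ C • ρ) :
    ∀ᵐ x ∂ρ, π.rnDeriv ρ x ≤ C := by
  refine ae_le_of_forall_setLIntegral_le_of_sigmaFinite (Measure.measurable_rnDeriv _ _)
    fun s _ _ => ?_
  calc ∫⁻ x in s, π.rnDeriv ρ x ∂ρ ≤ π s := Measure.setLIntegral_rnDeriv_le s
    _ ≤ C * ρ s := hπ s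
    _ = ∫⁻ _ in s, C ∂ρ := (setLIntegral_const s _).symm

theorem exists_mem_Icc_densityMeasure_eq {π : Measure α} {C : ℝ≥0} (hπ : π ≤ C • ρ) :
    ∃ h ∈ Icc 0 (Lp.const 2 ρ (C : ℝ)), densityMeasure ρ h = π := by
  have : IsFiniteMeasure π := isFiniteMeasure_of_le _ hπ
  have hac : π ≪ ρ := Measure.absolutelyContinuous_of_le_smul hπ
  have hle : ∀ᵐ x ∂ρ, (π.rnDeriv ρ x).toReal ≤ C := by
    filter_upwards [rnDeriv_le_of_le_smul hπ] with x hx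
    exact ENNReal.toReal_le_coe_of_le_coe hx
  have hmem : MemLp (fun x => (π.rnDeriv ρ x).toReal) 2 ρ := by
    refine .of_bound (Measure.measurable_rnDeriv _ _).ennreal_toReal.aestronglyMeasurable C ?_
    filter_upwards [hle] with x hx
    rwa [Real.norm_of_nonneg ENNReal.toReal_nonneg]
  refine ⟨hmem.toLp, ⟨?_, ?_⟩, ?_⟩
  · rw [← Lp.coeFn_nonneg]
    filter_upwards [hmem.coeFn_toLp] with x hx
    rw [hx]
    exact ENNReal.toReal_nonneg
  · rw [← Lp.coeFn_le]
    filter_upwards [hmem.coeFn_toLp, hle, Lp.coeFn_const 2 ρ (C : ℝ)] with x hx hxC hC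
    rwa [hx, hC]
  · calc densityMeasure ρ hmem.toLp = ρ.withDensity (π.rnDeriv ρ) := by
          refine withDensity_congr_ae ?_
          filter_upwards [hmem.coeFn_toLp, π.rnDeriv_lt_top ρ] with x hx hfin
          rw [hx, ENNReal.ofReal_toReal hfin.ne]
      _ = π := Measure.withDensity_rnDeriv_eq _ _ hac

theorem image_densityMeasure_Icc (C : ℝ≥0) :
    densityMeasure ρ '' Icc 0 (Lp.const 2 ρ (C : ℝ)) = {π | π ≤ C • ρ} := by
  refine Subset.antisymm ?_ fun π hπ => exists_mem_Icc_densityMeasure_eq hπ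
  rintro _ ⟨h, hh, rfl⟩
  calc densityMeasure ρ h ≤ ρ.withDensity fun _ => C := by
        refine withDensity_mono ?_
        filter_upwards [(Lp.coeFn_le h _).2 hh.2, Lp.coeFn_const 2 ρ (C : ℝ)] with x hx hC
        rw [hC, Function.const_apply] at hx
        exact ENNReal.ofReal_le_of_le_toReal hx
    _ = C • ρ := withDensity_const _

end Density

section Coupling

variable {α β : Type*} [MeasurableSpace α] [MeasurableSpace β]

/-- `π` is a coupling (transport plan) of `μ` and `ν`. -/
structure IsCoupling_s4 (μ : Measure α) (ν : Measure β) (π : Measure (α × β)) : Prop where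
  fst_eq : π.fst = μ
  snd_eq : π.snd = ν

/-- The couplings of `μ` and `ν` dominated by `C` times the product measure, for which optimal
transport plans live in a bounded part of a Hilbert space. -/
def dominatedCouplings (μ : Measure α) (ν : Measure β) (C : ℝ≥0) : Set (Measure (α × β)) :=
  {π | π ≤ C • μ.prod ν} ∩ {π | IsCoupling_s4 μ ν π}

/-- The densities in `L²(μ ⊗ ν)` of the couplings dominated by `C • μ.prod ν`. The marginal
conditions are linear constraints on the density, which makes this set closed and convex. -/
def couplingDensities (μ : Measure α) (ν : Measure β) [IsFiniteMeasure μ] [IsFiniteMeasure ν]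
    (C : ℝ≥0) : Set (Lp ℝ 2 (μ.prod ν)) :=
  Icc 0 (Lp.const 2 (μ.prod ν) (C : ℝ)) ∩
    ({h | ∀ s, MeasurableSet s → ∫ p in Prod.fst ⁻¹' s, h p ∂(μ.prod ν) = μ.real s} ∩
      {h | ∀ t, MeasurableSet t → ∫ p in Prod.snd ⁻¹' t, h p ∂(μ.prod ν) = ν.real t})

theorem IsCoupling_s4.isProbabilityMeasure {μ : Measure α} {ν : Measure β} {π : Measure (α × β)}
    [IsProbabilityMeasure μ] (hπ : IsCoupling_s4 μ ν π) : IsProbabilityMeasure π :=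
  ⟨by rw [← Measure.fst_univ, hπ.fst_eq, measure_univ]⟩

section FiniteMeasure

variable {μ : Measure α} {ν : Measure β} [IsFiniteMeasure μ] [IsFiniteMeasure ν]

theorem densityMeasure_fst_eq_iff {h : Lp ℝ 2 (μ.prod ν)} (hh : 0 ≤ h) :
    (densityMeasure (μ.prod ν) h).fst = μ ↔
      ∀ s, MeasurableSet s → ∫ p in Prod.fst ⁻¹' s, h p ∂(μ.prod ν) = μ.real s := by
  refine Measure.ext_iff.trans (forall₂_congr fun s hs => ?_)
  rw [Measure.fst_apply hs]
  exact densityMeasure_apply_eq_iff hh (measurable_fst hs) (measure_ne_top μ s)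

theorem densityMeasure_snd_eq_iff {h : Lp ℝ 2 (μ.prod ν)} (hh : 0 ≤ h) :
    (densityMeasure (μ.prod ν) h).snd = ν ↔
      ∀ t, MeasurableSet t → ∫ p in Prod.snd ⁻¹' t, h p ∂(μ.prod ν) = ν.real t := by
  refine Measure.ext_iff.trans (forall₂_congr fun t ht => ?_)
  rw [Measure.snd_apply ht]
  exact densityMeasure_apply_eq_iff hh (measurable_snd ht) (measure_ne_top ν t)

theorem couplingDensities_eq_inter_preimage (C : ℝ≥0) : couplingDensities μ ν C =
    Icc 0 (Lp.const 2 (μ.prod ν) (C : ℝ)) ∩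
      densityMeasure (μ.prod ν) ⁻¹' {π | IsCoupling_s4 μ ν π} := by
  ext h
  refine and_congr_right fun hh => ?_
  exact (and_congr (densityMeasure_fst_eq_iff hh.1) (densityMeasure_snd_eq_iff hh.1)).symm.trans
    ⟨fun hπ => ⟨hπ.1, hπ.2⟩, fun hπ => ⟨hπ.fst_eq, hπ.snd_eq⟩⟩

theorem image_densityMeasure_couplingDensities (C : ℝ≥0) :
    densityMeasure (μ.prod ν) '' couplingDensities μ ν C = dominatedCouplings μ ν C := by
  rw [couplingDensities_eq_inter_preimage, image_inter_preimage, image_densityMeasure_Icc,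
    dominatedCouplings]

theorem isClosed_couplingDensities (C : ℝ≥0) : IsClosed (couplingDensities μ ν C) := by
  simp only [couplingDensities, ofPred_forall]
  exact isClosed_Icc.inter <| .inter
    (isClosed_biInter fun _ hs =>
      isClosed_eq (continuous_setIntegral_L2 (measurable_fst hs)) continuous_const)
    (isClosed_biInter fun _ ht =>
      isClosed_eq (continuous_setIntegral_L2 (measurable_snd ht)) continuous_const)

theorem convex_couplingDensities (C : ℝ≥0) : Convex ℝ (couplingDensities μ ν C) := by
  simp only [couplingDensities, ofPred_forall]
  exact (convex_Icc _ _).inter <| .inter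
    (convex_iInter₂ fun _ hs => convex_setOf_setIntegral_eq (measurable_fst hs) _)
    (convex_iInter₂ fun _ ht => convex_setOf_setIntegral_eq (measurable_snd ht) _)

end FiniteMeasure

variable {μ : Measure α} {ν : Measure β} [IsProbabilityMeasure μ] [IsProbabilityMeasure ν]

theorem isCoupling_prod_s4 : IsCoupling_s4 μ ν (μ.prod ν) := ⟨Measure.fst_prod, Measure.snd_prod⟩

theorem exists_kernel_isMinOn_dominatedCouplings {X : Type*} [TopologicalSpace X]
    [MeasurableSpace X] [OpensMeasurableSpace X] {c : X → Lp ℝ 2 (μ.prod ν)} (hc : Continuous c)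
    {C : ℝ≥0} (hC : 1 ≤ C) :
    ∃ κ : Kernel X (α × β), ∀ x, κ x ∈ dominatedCouplings μ ν C ∧
      IsMinOn (fun π => ∫ p, c x p ∂π) (dominatedCouplings μ ν C) (κ x) := by
  set K := couplingDensities μ ν C
  have himage : densityMeasure (μ.prod ν) '' K = dominatedCouplings μ ν C :=
    image_densityMeasure_couplingDensities C
  have hne : K.Nonempty := by
    rw [← image_nonempty, himage]
    exact ⟨μ.prod ν, fun s => le_mul_of_one_le_left' (by exact_mod_cast hC), isCoupling_prod_s4⟩
  borelize ↥(Lp ℝ 2 (μ.prod ν))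
  obtain ⟨m, hm, hmin⟩ := exists_measurable_isMinOn_inner hne
    (isClosed_couplingDensities C).isComplete (convex_couplingDensities C)
    ((isBounded_Icc_zero_Lp _).subset inter_subset_left)
  have hmeas : Measurable fun x => densityMeasure (μ.prod ν) (m (c x)) := by
    refine Measure.measurable_of_measurable_coe _ fun s hs => ?_
    simp only [densityMeasure_apply (hmin _).1.1.1 hs]
    exact ((continuous_setIntegral_L2 hs).measurable.comp
      (hm.comp hc.measurable)).ennreal_ofReal
  refine ⟨⟨_, hmeas⟩, fun x => ⟨himage ▸ mem_image_of_mem _ (hmin _).1, ?_⟩⟩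
  rw [← himage]
  rintro _ ⟨h, hh, rfl⟩
  change ∫ p, c x p ∂(densityMeasure _ (m (c x))) ≤ ∫ p, c x p ∂(densityMeasure _ h)
  rw [integral_densityMeasure (hmin (c x)).1.1.1, integral_densityMeasure hh.1.1]
  exact (hmin (c x)).2 hh

end Coupling

section FiniteIndex

variable {ι E : Type*} [MeasurableSpace ι] [MeasurableSingletonClass ι] [MeasurableSpace E]
  {μ : Measure ι} {ν : Measure E}

theorem IsCoupling_s4.apply_singleton_prod_le {π : Measure (ι × E)} (hπ : IsCoupling_s4 μ ν π) (i : ι)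
    {t : Set E} (ht : MeasurableSet t) : π ({i} ×ˢ t) ≤ min (μ {i}) (ν t) := by
  rw [← hπ.fst_eq, ← hπ.snd_eq, Measure.fst_apply (measurableSet_singleton i),
    Measure.snd_apply ht]
  exact le_min (measure_mono fun p hp => hp.1) (measure_mono fun p hp => hp.2)

theorem exists_forall_isCoupling_le_smul_prod [Finite ι] [IsFiniteMeasure μ] [SFinite ν] :
    ∃ C : ℝ≥0, 1 ≤ C ∧ ∀ π, IsCoupling_s4 μ ν π → π ≤ C • μ.prod ν := by
  cases nonempty_fintype ι
  set C : ℝ≥0 := 1 + ∑ i, (μ {i}).toNNReal⁻¹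
  have one_le_mul : ∀ i, μ {i} ≠ 0 → 1 ≤ (C : ℝ≥0∞) * μ {i} := fun i hi => by
    have htop := measure_ne_top μ {i}
    have hinv : (μ {i}).toNNReal⁻¹ ≤ C :=
      (Finset.single_le_sum (f := fun j => (μ {j}).toNNReal⁻¹) (fun _ _ => zero_le)
        (Finset.mem_univ i)).trans le_add_self
    calc
      1 = ((μ {i}).toNNReal⁻¹ : ℝ≥0) * μ {i} := by
        rw [ENNReal.coe_inv (ENNReal.toNNReal_ne_zero.2 ⟨hi, htop⟩), ENNReal.coe_toNNReal htop,
          ENNReal.inv_mul_cancel hi htop]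
      _ ≤ C * μ {i} := by gcongr
  refine ⟨C, le_self_add, fun π hπ => Measure.le_iff.2 fun s hs => ?_⟩
  have hsec : ∀ i, MeasurableSet (Prod.mk i ⁻¹' s) := fun i => measurable_prodMk_left hs
  have hrow : ∀ i, π ({i} ×ˢ (Prod.mk i ⁻¹' s)) ≤ C * (μ {i} * ν (Prod.mk i ⁻¹' s)) := fun i => by
    have hle := le_min_iff.1 (hπ.apply_singleton_prod_le i (hsec i))
    rcases eq_or_ne (μ {i}) 0 with hi | hi
    · exact (hle.1.trans_eq hi).trans zero_le
    · rw [← mul_assoc]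
      exact hle.2.trans (le_mul_of_one_le_left' (one_le_mul i hi))
  calc
    π s ≤ π (⋃ i, {i} ×ˢ (Prod.mk i ⁻¹' s)) :=
      measure_mono fun p hp => mem_iUnion.2 ⟨p.1, rfl, hp⟩
    _ ≤ ∑ i, π ({i} ×ˢ (Prod.mk i ⁻¹' s)) := measure_iUnion_fintype_le _ _
    _ ≤ ∑ i, C * (μ {i} * ν (Prod.mk i ⁻¹' s)) := Finset.sum_le_sum fun i _ => hrow i
    _ = C * (μ.prod ν) s := by
      rw [Measure.prod_apply hs, lintegral_fintype, Finset.mul_sum]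
      simp only [mul_comm (μ _)]

variable [Finite ι] [NormedAddCommGroup E] [BorelSpace E] [SecondCountableTopology E]

theorem memLp_norm_sub_sub_norm (ρ : Measure (ι × E)) [IsFiniteMeasure ρ] (p : ℝ≥0∞) (v : ι → E) :
    MemLp (fun q : ι × E => ‖q.2 - v q.1‖ - ‖q.2‖) p ρ := by
  cases nonempty_fintype ι
  have hv := measurable_of_finite v
  refine MemLp.of_bound (by fun_prop) ‖v‖ (.of_forall fun q => ?_)
  calc
    ‖‖q.2 - v q.1‖ - ‖q.2‖‖ ≤ ‖q.2 - v q.1 - q.2‖ := abs_norm_sub_norm_le _ _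
    _ = ‖v q.1‖ := by rw [sub_sub_cancel_left, norm_neg]
    _ ≤ ‖v‖ := norm_le_pi_norm v q.1

/-- The cost of transporting `x` to the particle `v i` minus `‖x‖`, as an element of `L²(ρ)`. The
term `‖x‖`, whose integral does not depend on the coupling, is subtracted to make the cost bounded,
so that no second moment is required. -/
def reducedCost (ρ : Measure (ι × E)) [IsFiniteMeasure ρ] (v : ι → E) : Lp ℝ 2 ρ :=
  (memLp_norm_sub_sub_norm ρ 2 v).toLp

theorem coeFn_reducedCost (ρ : Measure (ι × E)) [IsFiniteMeasure ρ] (v : ι → E) :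
    reducedCost ρ v =ᵐ[ρ] fun q => ‖q.2 - v q.1‖ - ‖q.2‖ :=
  (memLp_norm_sub_sub_norm ρ 2 v).coeFn_toLp

theorem continuous_reducedCost (ρ : Measure (ι × E)) [IsFiniteMeasure ρ] :
    Continuous (reducedCost ρ) := by
  cases nonempty_fintype ι
  refine (LipschitzWith.of_dist_le_mul
    (K := measureUnivNNReal ρ ^ (2 : ℝ≥0∞).toReal⁻¹) fun v w => ?_).continuous
  rw [dist_eq_norm, dist_eq_norm, NNReal.coe_rpow]
  refine Lp.norm_le_of_ae_bound (norm_nonneg _) ?_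
  filter_upwards [coeFn_reducedCost ρ v, coeFn_reducedCost ρ w,
    Lp.coeFn_sub (reducedCost ρ v) (reducedCost ρ w)] with q hv hw hsub
  rw [hsub, Pi.sub_apply, hv, hw, sub_sub_sub_cancel_right]
  calc
    ‖‖q.2 - v q.1‖ - ‖q.2 - w q.1‖‖ ≤ ‖q.2 - v q.1 - (q.2 - w q.1)‖ := abs_norm_sub_norm_le _ _
    _ = ‖(v - w) q.1‖ := by rw [sub_sub_sub_cancel_left, norm_sub_rev, Pi.sub_apply]
    _ ≤ ‖v - w‖ := norm_le_pi_norm (v - w) q.1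

theorem IsCoupling_s4.integral_norm_sub {ρ π : Measure (ι × E)} [IsFiniteMeasure ρ]
    [IsFiniteMeasure π] (hπ : IsCoupling_s4 μ ν π) (hπρ : π ≪ ρ) (hν : Integrable (fun x => ‖x‖) ν)
    (v : ι → E) :
    ∫ q, ‖q.2 - v q.1‖ ∂π = ∫ q, reducedCost ρ v q ∂π + ∫ x, ‖x‖ ∂ν := by
  have hsnd : MeasurePreserving Prod.snd π ν := ⟨measurable_snd, hπ.snd_eq⟩
  have hnorm : Integrable (fun q : ι × E => ‖q.2‖) π := hsnd.integrable_comp_of_integrable hν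
  have hdiff : Integrable (fun q : ι × E => ‖q.2 - v q.1‖ - ‖q.2‖) π :=
    memLp_one_iff_integrable.1 (memLp_norm_sub_sub_norm π 1 v)
  rw [integral_congr_ae (hπρ.ae_eq (coeFn_reducedCost ρ v)), ← hsnd.map_eq,
    integral_map measurable_snd.aemeasurable (by fun_prop), ← integral_add hdiff hnorm]
  simp only [sub_add_cancel]

theorem exists_kernel_isMinOn_isCoupling [IsProbabilityMeasure μ] [IsProbabilityMeasure ν]
    (hν : Integrable (fun x => ‖x‖) ν) :
    ∃ κ : Kernel (ι → E) (ι × E), ∀ v, IsCoupling_s4 μ ν (κ v) ∧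
      IsMinOn (fun π => ∫ q, ‖q.2 - v q.1‖ ∂π) {π | IsCoupling_s4 μ ν π} (κ v) := by
  obtain ⟨C, hC, hle⟩ := exists_forall_isCoupling_le_smul_prod (μ := μ) (ν := ν)
  have hdom : dominatedCouplings μ ν C = {π | IsCoupling_s4 μ ν π} :=
    inter_eq_right.2 hle
  obtain ⟨κ, hκ⟩ :=
    exists_kernel_isMinOn_dominatedCouplings (continuous_reducedCost (μ.prod ν)) hC
  rw [hdom] at hκ
  have hcost : ∀ v π, IsCoupling_s4 μ ν π →
      ∫ q, ‖q.2 - v q.1‖ ∂π = ∫ q, reducedCost (μ.prod ν) v q ∂π + ∫ x, ‖x‖ ∂ν := fun v π hπ =>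
    have := hπ.isProbabilityMeasure
    hπ.integral_norm_sub (Measure.absolutelyContinuous_of_le_smul (hle π hπ)) hν v
  refine ⟨κ, fun v => ⟨(hκ v).1, fun π hπ => ?_⟩⟩
  change ∫ q, ‖q.2 - v q.1‖ ∂(κ v) ≤ ∫ q, ‖q.2 - v q.1‖ ∂π
  rw [hcost v _ (hκ v).1, hcost v π hπ]
  exact add_le_add_left ((hκ v).2 hπ) _

end FiniteIndex

section Gluing

variable {Y Z E : Type*} [MeasurableSpace Y] [MeasurableSpace Z] [MeasurableSpace E]

theorem map_compProd_comap (μ : Measure Y) [SFinite μ] (κ : Kernel Z E) [IsSFiniteKernel κ]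
    {g : Y → Z} (hg : Measurable g) :
    (μ ⊗ₘ κ.comap g hg).map (Prod.map g id) = μ.map g ⊗ₘ κ := by
  have hgid : Measurable (Prod.map g (id : E → E)) := hg.prodMap measurable_id
  ext s hs
  rw [Measure.map_apply hgid hs, Measure.compProd_apply (hgid hs), Measure.compProd_apply hs,
    lintegral_map (Kernel.measurable_kernel_prodMk_left hs) hg]
  rfl

theorem IsCoupling_s4.exists_lift [StandardBorelSpace E] [Nonempty E] {μ : Measure Y} {ν : Measure E}
    [IsProbabilityMeasure μ] {g : Y → Z} (hg : Measurable g) {π : Measure (Z × E)}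
    (hπ : IsCoupling_s4 (μ.map g) ν π) :
    ∃ π', IsCoupling_s4 μ ν π' ∧ π'.map (Prod.map g id) = π := by
  have := Measure.isProbabilityMeasure_map (μ := μ) hg.aemeasurable
  have := hπ.isProbabilityMeasure
  have hmap : (μ ⊗ₘ π.condKernel.comap g hg).map (Prod.map g id) = π := by
    rw [map_compProd_comap, ← hπ.fst_eq, Measure.disintegrate]
  refine ⟨_, ⟨Measure.fst_compProd _ _, ?_⟩, hmap⟩
  calc
    (μ ⊗ₘ π.condKernel.comap g hg).snd
      = ((μ ⊗ₘ π.condKernel.comap g hg).map (Prod.map g id)).snd :=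
        (Measure.map_map measurable_snd (hg.prodMap measurable_id)).symm
    _ = ν := by rw [hmap, hπ.snd_eq]

theorem IsCoupling_s4.map_prodMk_snd {μ : Measure Y} {ν : Measure E} {g : Y → Z} (hg : Measurable g)
    {π : Measure (Y × E)} (hπ : IsCoupling_s4 μ ν π) :
    IsCoupling_s4 ν (μ.map g) (π.map fun q => (q.2, g q.1)) where
  fst_eq := by
    rw [Measure.fst_map_prodMk (by fun_prop)]
    exact hπ.snd_eq
  snd_eq := by
    rw [Measure.snd_map_prodMk measurable_snd, ← hπ.fst_eq]
    exact (Measure.map_map hg measurable_fst).symm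

end Gluing

section Wasserstein

variable {Y E : Type*} [MeasurableSpace Y] [NormedAddCommGroup E] [MeasurableSpace E]
  [BorelSpace E] [SecondCountableTopology E] {μ : Measure Y} {ν : Measure E} {g : Y → E}

theorem integral_norm_sub_map_prodMk_snd (π : Measure (Y × E)) (hg : Measurable g) :
    ∫ p, ‖p.1 - p.2‖ ∂(π.map fun q => (q.2, g q.1)) = ∫ q, ‖q.2 - g q.1‖ ∂π :=
  integral_map (by fun_prop) (by fun_prop)

theorem integral_norm_sub_eq_W1 [StandardBorelSpace E] [IsProbabilityMeasure μ] (hg : Measurable g)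
    {π : Measure (Y × E)} (hπ : IsCoupling_s4 μ ν π)
    (hmin : IsMinOn (fun π => ∫ q, ‖q.2 - g q.1‖ ∂π) {π | IsCoupling_s4 μ ν π} π) :
    ∫ q, ‖q.2 - g q.1‖ ∂π = W1 ν (μ.map g) := by
  have hπg := hπ.map_prodMk_snd hg
  refine Eq.symm (IsLeast.csInf_eq ⟨⟨_, hπg.fst_eq, hπg.snd_eq,
    (integral_norm_sub_map_prodMk_snd π hg).symm⟩, ?_⟩)
  rintro _ ⟨γ, hfst, hsnd, rfl⟩
  have hswap : IsCoupling_s4 (μ.map g) ν (γ.map Prod.swap) :=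
    ⟨Measure.fst_map_swap.trans hsnd, Measure.snd_map_swap.trans hfst⟩
  obtain ⟨π', hπ', hmap⟩ := hswap.exists_lift hg
  have hγ : (π'.map fun q => (q.2, g q.1)) = γ := by
    have hcomp := congrArg (Measure.map Prod.swap) hmap
    rw [Measure.map_map measurable_swap (hg.prodMap measurable_id),
      Measure.map_map measurable_swap measurable_swap, Prod.swap_swap_eq, Measure.map_id] at hcomp
    exact hcomp
  rw [← hγ, integral_norm_sub_map_prodMk_snd π' hg]
  exact hmin hπ'

end Wasserstein

theorem exists_measurable_measurePreserving_prodMk {X ι E : Type*} [MeasurableSpace X]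
    [MeasurableSpace ι] [MeasurableSpace E] [StandardBorelSpace E] [Nonempty E]
    [MeasurableSpace.CountableOrCountablyGenerated X ι]
    (κ : Kernel X (ι × E)) [IsMarkovKernel κ] :
    ∃ g : X × ι → unitInterval → E, Measurable (Function.uncurry g) ∧ ∀ x,
      MeasurePreserving (fun q => (q.1, g (x, q.1) q.2)) ((κ x).fst.prod volume) (κ x) := by
  obtain ⟨g, hg, hmap⟩ := κ.condKernel.exists_measurable_map_eq_unitInterval
  have hpair : ∀ x, Measurable fun q : ι × unitInterval => (q.1, g (x, q.1) q.2) := fun x =>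
    measurable_fst.prodMk <|
      hg.comp (f := fun q : ι × unitInterval => ((x, q.1), q.2)) (by fun_prop)
  refine ⟨g, hg, fun x => ⟨hpair x, ?_⟩⟩
  conv_rhs => rw [← κ.disintegrate κ.condKernel]
  ext s hs
  rw [Measure.map_apply (hpair x) hs, Measure.prod_apply (hpair x hs),
    Kernel.compProd_apply hs, Kernel.fst_apply]
  refine lintegral_congr fun i => ?_
  rw [← hmap (x, i), Measure.map_apply hg.of_uncurry_left (measurable_prodMk_left hs)]
  rfl

section EmpiricalMeasure

variable {E F : Type*} [MeasurableSpace E] [MeasurableSpace F] {N : ℕ}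

theorem map_empMeas (v : Fin N → E) {g : E → F} (hg : Measurable g) :
    (empMeas v).map g = empMeas (g ∘ v) := by
  simp only [empMeas, Measure.map_smul, Measure.map_finset_sum' hg.aemeasurable,
    Measure.map_dirac' hg, Function.comp_apply]

theorem empMeas_prod (v : Fin N → E) (ν : Measure F) [SFinite ν] :
    (empMeas v).prod ν = (N : ℝ≥0∞)⁻¹ • ∑ i, ν.map (Prod.mk (v i)) := by
  rw [empMeas, Measure.prod_smul_left, ← Measure.sum_fintype, Measure.prod_sum_left,
    Measure.sum_fintype]
  simp only [Measure.dirac_prod]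

instance isProbabilityMeasure_empMeas [NeZero N] (v : Fin N → E) :
    IsProbabilityMeasure (empMeas v) where
  measure_univ := by
    simp [empMeas, ENNReal.inv_mul_cancel (Nat.cast_ne_zero.2 (NeZero.ne N))]

end EmpiricalMeasure

section UniformIndex

theorem volume_restrict_Ico_natCast (N : ℕ) :
    volume.restrict (Ico (0 : ℝ) N) = ∑ i : Fin N, volume.restrict (Ico (i : ℝ) (i + 1)) := by
  induction N with
  | zero => simp
  | succ n ih =>
    rw [Fin.sum_univ_castSucc, Nat.cast_succ,
      ← Ico_union_Ico_eq_Ico (Nat.cast_nonneg n) (le_add_of_nonneg_right zero_le_one),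
      Measure.restrict_union Ico_disjoint_Ico_same measurableSet_Ico, ih]
    rfl

theorem map_coe_add_volume_unitInterval (a : ℝ) :
    (volume : Measure unitInterval).map (fun u : unitInterval => (u : ℝ) + a) =
      volume.restrict (Ico a (a + 1)) := by
  have hpre : (fun x : ℝ => x + a) ⁻¹' Icc a (a + 1) = unitInterval := by
    rw [preimage_add_const_Icc, sub_self, add_sub_cancel_left]
  have hadd := (measurePreserving_add_right (volume : Measure ℝ) a).restrict_preimage
    (measurableSet_Icc (a := a) (b := a + 1))
  rw [hpre] at hadd
  rw [Measure.restrict_congr_set Ico_ae_eq_Icc]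
  exact (hadd.comp unitInterval.measurePreserving_coe).map_eq

variable (N : ℕ) [NeZero N]

theorem measurable_jIdx : Measurable (jIdx N) :=
  have : Measurable fun z : ℤ => (⟨z.toNat % N, Nat.mod_lt _ (NeZero.pos N)⟩ : Fin N) :=
    measurable_from_top
  this.comp Int.measurable_floor

/-- Splits `α ∈ [0, N)` into the index `j(α)` and the fractional part of `α`. Under the uniform
distribution these are independent, so the latter can serve as a source of randomness. -/
def jIdxFract (α : ℝ) : Fin N × unitInterval :=
  (jIdx N α, ⟨Int.fract α, unitInterval.fract_mem α⟩)

theorem measurable_jIdxFract : Measurable (jIdxFract N) :=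
  (measurable_jIdx N).prodMk measurable_fract.subtype_mk

theorem jIdxFract_coe_add (i : Fin N) {u : unitInterval} (hu : u ≠ 1) :
    jIdxFract N (u + i) = (i, u) := by
  have hlt : (u : ℝ) < 1 := u.2.2.lt_of_ne fun h => hu (Subtype.ext h)
  have hfract : Int.fract (u : ℝ) = u := Int.fract_eq_self.2 ⟨u.2.1, hlt⟩
  have hfloor : ⌊(u : ℝ)⌋ = 0 := Int.floor_eq_zero_iff.2 ⟨u.2.1, hlt⟩
  refine Prod.ext (Fin.ext ?_) (Subtype.ext ?_)
  · change ⌊(u : ℝ) + i⌋.toNat % N = i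
    rw [Int.floor_add_natCast, hfloor, zero_add, Int.toNat_natCast, Nat.mod_eq_of_lt i.2]
  · exact (Int.fract_add_natCast _ _).trans hfract

theorem measurePreserving_jIdxFract :
    MeasurePreserving (jIdxFract N) (unifIco N) ((empMeas (id : Fin N → Fin N)).prod volume) := by
  refine ⟨measurable_jIdxFract N, ?_⟩
  rw [unifIco, volume_restrict_Ico_natCast, empMeas_prod, Measure.map_smul,
    Measure.map_finset_sum' (measurable_jIdxFract N).aemeasurable]
  refine congrArg _ (Finset.sum_congr rfl fun i _ => ?_)
  rw [← map_coe_add_volume_unitInterval, Measure.map_map (measurable_jIdxFract N) (by fun_prop)]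
  refine Measure.map_congr ?_
  filter_upwards [compl_mem_ae_iff.2 (measure_singleton (1 : unitInterval))] with u hu
  exact jIdxFract_coe_add N i hu

end UniformIndex

theorem nanbu_coupling_lemma_general {E : Type*} [NormedAddCommGroup E] [MeasurableSpace E]
    [BorelSpace E] [SecondCountableTopology E] [StandardBorelSpace E] (N : ℕ) [NeZero N]
    (f : Measure E) [IsProbabilityMeasure f] (hf : Integrable (fun v => ‖v‖) f) :
    ∃ Wstar : (Fin N → E) × ℝ → E, Measurable Wstar ∧
      ∀ v : Fin N → E,
        (Measure.map (fun α : ℝ => (Wstar (v, α), v (jIdx N α))) (unifIco N)).map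
            Prod.fst = f ∧
        (Measure.map (fun α : ℝ => (Wstar (v, α), v (jIdx N α))) (unifIco N)).map
            Prod.snd = empMeas v ∧
        (∫ p, ‖p.1 - p.2‖
            ∂(Measure.map (fun α : ℝ => (Wstar (v, α), v (jIdx N α))) (unifIco N)))
          = W1 f (empMeas v) := by
  obtain ⟨κ, hκ⟩ := exists_kernel_isMinOn_isCoupling (μ := empMeas (id : Fin N → Fin N)) hf
  have : IsMarkovKernel κ := ⟨fun v => (hκ v).1.isProbabilityMeasure⟩
  obtain ⟨g, hg, hgκ⟩ := exists_measurable_measurePreserving_prodMk κ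
  let Wstar (p : (Fin N → E) × ℝ) : E := g (p.1, (jIdxFract N p.2).1) (jIdxFract N p.2).2
  have hWstar : Measurable Wstar :=
    have hsplit := (measurable_jIdxFract N).comp (measurable_snd (α := Fin N → E))
    hg.comp ((measurable_fst.prodMk hsplit.fst).prodMk hsplit.snd)
  refine ⟨Wstar, hWstar, fun v => ?_⟩
  have hv := measurable_of_finite v
  have hplan : MeasurePreserving (fun α => (jIdx N α, Wstar (v, α))) (unifIco N) (κ v) :=
    (hgκ v).comp ((hκ v).1.fst_eq.symm ▸ measurePreserving_jIdxFract N)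
  have hlaw : (unifIco N).map (fun α => (Wstar (v, α), v (jIdx N α))) =
      (κ v).map fun q => (q.2, v q.1) := by
    rw [← hplan.map_eq, Measure.map_map (by fun_prop) hplan.measurable]
    rfl
  have hemp : (empMeas id).map v = empMeas v := map_empMeas id hv
  have hcoupling := (hκ v).1.map_prodMk_snd hv
  rw [hlaw, integral_norm_sub_map_prodMk_snd _ hv, ← hemp]
  exact ⟨hcoupling.fst_eq, hcoupling.snd_eq, integral_norm_sub_eq_W1 hv (hκ v).1 (hκ v).2⟩

/-- coupling lemma for the Nanbu method.  There is a measurable map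
`W*_f` such that for every configuration `v`, if `α` is uniform on `[0,N)` then
`(W*_f(v,α), v^{j(α)})` is an optimal transport plan between `f` and the
empirical measure `μ_v`. -/
theorem nanbu_coupling_lemma (d N : ℕ) [NeZero N]
    (f : Measure (Vec d)) [IsProbabilityMeasure f]
    (hf : Integrable (fun v : Vec d => ‖v‖) f) :
    ∃ Wstar : (Fin N → Vec d) × ℝ → Vec d, Measurable Wstar ∧
      ∀ v : Fin N → Vec d,
        (Measure.map (fun α : ℝ => (Wstar (v, α), v (jIdx N α))) (unifIco N)).map
            Prod.fst = f ∧
        (Measure.map (fun α : ℝ => (Wstar (v, α), v (jIdx N α))) (unifIco N)).map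
            Prod.snd = empMeas v ∧
        (∫ p, ‖p.1 - p.2‖
            ∂(Measure.map (fun α : ℝ => (Wstar (v, α), v (jIdx N α))) (unifIco N)))
          = W1 f (empMeas v) :=
  nanbu_coupling_lemma_general N f hf

end
end
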